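/- arXiv:2312.16103 — 2 statements merged into one kernel-verified Lean document; each statement's English description precedes it below -/
import Mathlib

section
/- Let μ be a probability mass function on T₁ with 0 < β := Σ_τ μ(τ)·deg(τ) < ∞, let η₁ be the law on T₁ with degree distribution Q and i.i.d. marks, where Q has finite nonzero mean, and assume μ is absolutely continuous with respect to η₁. Then μ is absolutely continuous with respect to μ̌ and μ is absolutely continuous with respect to μ̂ (i.e., μ̌(τ) = 0 implies μ(τ) = 0, and μ̂(τ) = 0 implies μ(τ) = 0, for every τ ∈ T₁). -/
open scoped BigOperators ENNReal Classical

noncomputable section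

/-- Depth-1 rooted marked trees: the root mark together with the multiset of
(vertex mark, edge mark toward the root, edge mark at the root) triples of the
neighbors of the root. -/
abbrev T1 (𝒳 𝒴 : Type) : Type := 𝒳 × Multiset (𝒳 × 𝒴 × 𝒴)

section Defs

variable {𝒳 𝒴 : Type} [Fintype 𝒳] [Fintype 𝒴] [DecidableEq 𝒳] [DecidableEq 𝒴]

/-- Degree of the root of a depth-1 tree. -/
def deg (τ : T1 𝒳 𝒴) : ℕ := Multiset.card τ.2

/-- Symmetrized edge-mark distribution `ξ̄(y, y') = (ξ(y, y') + ξ(y', y)) / 2`. -/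
def xiBar (ξ : 𝒴 × 𝒴 → ℝ) (y y' : 𝒴) : ℝ := (ξ (y, y') + ξ (y', y)) / 2

/-- Multinomial coefficient `card m ! / ∏ₛ (multiplicity of s in m)!`. -/
def ordCoeff (m : Multiset (𝒳 × 𝒴 × 𝒴)) : ℝ :=
  (Nat.factorial (Multiset.card m) : ℝ) /
    ∏ s ∈ m.toFinset, (Nat.factorial (m.count s) : ℝ)

/-- The law `η₁` on `T1` with root-degree distribution `Q` and i.i.d. marks:
`η₁ (x, m) = ν x · Q (card m) · (card m)!/∏ₛ count s !· ∏_{(a,y,y') ∈ m} ν a · ξ̄ y y'`. -/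
def eta1 (ν : 𝒳 → ℝ) (ξ : 𝒴 × 𝒴 → ℝ) (Q : ℕ → ℝ) (τ : T1 𝒳 𝒴) : ℝ :=
  ν τ.1 * Q (Multiset.card τ.2) * ordCoeff τ.2 *
    (τ.2.map fun p => ν p.1 * xiBar ξ p.2.1 p.2.2).prod

/-- Mean root degree `β = ∑_τ μ τ · deg τ`. -/
def meanDeg (μ : T1 𝒳 𝒴 → ℝ) : ℝ := ∑' τ : T1 𝒳 𝒴, μ τ * (deg τ : ℝ)

/-- The neighbor–root marginal `μ̄^{1,o}`:
`μ̄^{1,o} ((a,y), (b,y')) = (1/β) ∑_{m} μ (b, m) · (multiplicity of (a,y,y') in m)`. -/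
def nbrRoot (μ : T1 𝒳 𝒴 → ℝ) (p : (𝒳 × 𝒴) × (𝒳 × 𝒴)) : ℝ :=
  (1 / meanDeg μ) *
    ∑' m : Multiset (𝒳 × 𝒴 × 𝒴), μ (p.2.1, m) * (m.count (p.1.1, p.1.2, p.2.2) : ℝ)

/-- First marginal `μ̄¹` of `μ̄^{1,o}`. -/
def marg1 (μ : T1 𝒳 𝒴 → ℝ) (u : 𝒳 × 𝒴) : ℝ := ∑ v : 𝒳 × 𝒴, nbrRoot μ (u, v)

/-- Second marginal `μ̄ᵒ` of `μ̄^{1,o}`. -/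
def margO (μ : T1 𝒳 𝒴 → ℝ) (v : 𝒳 × 𝒴) : ℝ := ∑ u : 𝒳 × 𝒴, nbrRoot μ (u, v)

/-- Conditional law `μ̄^{1|o} (u | v) = μ̄^{1,o}(u,v) / μ̄ᵒ(v)` (and `0` if `μ̄ᵒ(v) = 0`). -/
def condNbr (μ : T1 𝒳 𝒴 → ℝ) (u v : 𝒳 × 𝒴) : ℝ :=
  if 0 < margO μ v then nbrRoot μ (u, v) / margO μ v else 0

/-- `μ̌ (x, m) = η₁ (x, m) · ∏_{(a,y,y') ∈ m} μ̄¹(a,y) / η̄₁¹(a,y)` (product with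
multiplicity; in Lean a ratio with zero denominator is `0`). -/
def muCheck (ν : 𝒳 → ℝ) (ξ : 𝒴 × 𝒴 → ℝ) (Q : ℕ → ℝ) (μ : T1 𝒳 𝒴 → ℝ) (τ : T1 𝒳 𝒴) : ℝ :=
  eta1 ν ξ Q τ *
    (τ.2.map fun p => marg1 μ (p.1, p.2.1) / marg1 (eta1 ν ξ Q) (p.1, p.2.1)).prod

/-- `μ̂ (x, m) = η₁ (x, m) · ∏_{(a,y,y') ∈ m} μ̄^{1|o}((a,y)|(x,y')) / η̄₁^{1|o}((a,y)|(x,y'))`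
(product with multiplicity; a ratio with zero denominator is `0`). -/
def muHat (ν : 𝒳 → ℝ) (ξ : 𝒴 × 𝒴 → ℝ) (Q : ℕ → ℝ) (μ : T1 𝒳 𝒴 → ℝ) (τ : T1 𝒳 𝒴) : ℝ :=
  eta1 ν ξ Q τ *
    (τ.2.map fun p =>
      condNbr μ (p.1, p.2.1) (τ.1, p.2.2) /
        condNbr (eta1 ν ξ Q) (p.1, p.2.1) (τ.1, p.2.2)).prod

end Defs

/-- Relative entropy `H(p ‖ q) = ∑ₛ p s * log (p s / q s)` of probability mass
functions, with value `∞` when `p` is not absolutely continuous with respect to `q`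
(or the defining series diverges); `0·log 0 = 0` is automatic since `Real.log 0 = 0`. -/
def relEnt {S : Type*} (p q : S → ℝ) : ℝ≥0∞ :=
  if (∀ s, q s = 0 → p s = 0) ∧ Summable (fun s => p s * Real.log (p s / q s)) then
    ENNReal.ofReal (∑' s, p s * Real.log (p s / q s))
  else ⊤

theorem aux_nbrRoot_pos {𝒳 𝒴 : Type} [Fintype 𝒳] [Fintype 𝒴] [DecidableEq 𝒳] [DecidableEq 𝒴]
    (f : T1 𝒳 𝒴 → ℝ) (hf : ∀ τ, 0 ≤ f τ)
    (hs : Summable fun τ : T1 𝒳 𝒴 => f τ * (deg τ : ℝ)) :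
    (∀ p, 0 ≤ nbrRoot f p) ∧ ∀ τ, 0 < f τ → ∀ p ∈ τ.2,
      0 < nbrRoot f ((p.1, p.2.1), (τ.1, p.2.2)) := by
  have h0 : 0 ≤ meanDeg f := tsum_nonneg fun τ => mul_nonneg (hf τ) (Nat.cast_nonneg _)
  constructor
  · intro p
    unfold nbrRoot
    exact mul_nonneg (by positivity)
      (tsum_nonneg fun m => mul_nonneg (hf _) (Nat.cast_nonneg _))
  · rintro ⟨x, m⟩ hτ ⟨a, y, y'⟩ hp
    have hb : 0 < meanDeg f := by
      refine hs.tsum_pos (fun τ => mul_nonneg (hf τ) (Nat.cast_nonneg _)) (x, m) ?_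
      refine mul_pos hτ ?_
      have : 0 < deg ((x, m) : T1 𝒳 𝒴) := Multiset.card_pos_iff_exists_mem.2 ⟨_, hp⟩
      exact_mod_cast this
    unfold nbrRoot
    refine mul_pos (by positivity) ?_
    have hs2 : Summable fun m : Multiset (𝒳 × 𝒴 × 𝒴) => f (x, m) * (deg ((x, m) : T1 𝒳 𝒴) : ℝ) :=
      hs.comp_injective (Prod.mk_right_injective x)
    refine Summable.tsum_pos (Summable.of_nonneg_of_le
      (fun m => mul_nonneg (hf _) (Nat.cast_nonneg _)) (fun m => ?_) hs2)
      (fun m => mul_nonneg (hf _) (Nat.cast_nonneg _)) m ?_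
    · refine mul_le_mul_of_nonneg_left ?_ (hf _)
      exact_mod_cast Multiset.count_le_card _ _
    · refine mul_pos hτ ?_
      exact_mod_cast Multiset.count_pos.2 hp

theorem aux_ordCoeff {𝒳 𝒴 : Type} [DecidableEq 𝒳] [DecidableEq 𝒴]
    (m : Multiset (𝒳 × 𝒴 × 𝒴)) : ordCoeff m = (m.countPerms : ℝ) := by
  have h : (∏ s ∈ m.toFinset, Nat.factorial (m.count s)) * m.countPerms
      = Nat.factorial (Multiset.card m) := by
    have := Nat.multinomial_spec m.toFinset (fun s => m.count s)
    rw [Multiset.toFinset_sum_count_eq] at this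
    rw [← this]
    congr 1
  unfold ordCoeff
  rw [← h, div_eq_iff]
  · push_cast
    ring
  · exact Finset.prod_ne_zero_iff.2 fun s _ => by positivity

theorem aux_eta1 {𝒳 𝒴 : Type} [Fintype 𝒳] [Fintype 𝒴] [DecidableEq 𝒳] [DecidableEq 𝒴]
    (ν : 𝒳 → ℝ) (hν0 : ∀ x, 0 ≤ ν x) (hν1 : ∑ x, ν x = 1)
    (ξ : 𝒴 × 𝒴 → ℝ) (hξ0 : ∀ p, 0 ≤ ξ p) (hξ1 : ∑ p : 𝒴 × 𝒴, ξ p = 1)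
    (Q : ℕ → ℝ) (hQ0 : ∀ k, 0 ≤ Q k) 
    (hQm : Summable fun k : ℕ => (k : ℝ) * Q k) :
    (∀ τ : T1 𝒳 𝒴, 0 ≤ eta1 ν ξ Q τ) ∧
      Summable fun τ : T1 𝒳 𝒴 => eta1 ν ξ Q τ * (deg τ : ℝ) := by
  set w : 𝒳 × 𝒴 × 𝒴 → ℝ := fun p => ν p.1 * xiBar ξ p.2.1 p.2.2 with hw
  have hw0 : ∀ p, 0 ≤ w p := fun p => mul_nonneg (hν0 _) (by
    unfold xiBar; have := hξ0 (p.2.1, p.2.2); have := hξ0 (p.2.2, p.2.1); linarith)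
  have hprod : ∀ m : Multiset (𝒳 × 𝒴 × 𝒴), 0 ≤ (m.map w).prod := fun m =>
    Multiset.prod_nonneg (by
      intro a ha
      obtain ⟨p, -, rfl⟩ := Multiset.mem_map.1 ha
      exact hw0 p)
  have hw1 : ∑ p, w p = 1 := by
    have h2 : ∑ y, ∑ y', ξ (y, y') = 1 := by rw [← hξ1, Fintype.sum_prod_type]
    have h3 : ∑ y, ∑ y', ξ (y', y) = 1 := by rw [Finset.sum_comm]; exact h2
    simp only [hw, Fintype.sum_prod_type, ← Finset.mul_sum, ← Finset.sum_mul, hν1, xiBar,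
      ← Finset.sum_div, Finset.sum_add_distrib, h2, h3]
    norm_num
  have heta : ∀ τ : T1 𝒳 𝒴, eta1 ν ξ Q τ =
      ν τ.1 * (Q (Multiset.card τ.2) * (τ.2.countPerms * (τ.2.map w).prod)) := by
    intro τ
    unfold eta1
    rw [aux_ordCoeff]
    ring
  have hnn : ∀ m : Multiset (𝒳 × 𝒴 × 𝒴), 0 ≤ (m.countPerms * (m.map w).prod : ℝ) :=
    fun m => mul_nonneg (Nat.cast_nonneg _) (hprod m)
  have hs : Summable fun m : Multiset (𝒳 × 𝒴 × 𝒴) =>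
      (Multiset.card m * Q (Multiset.card m)) * (m.countPerms * (m.map w).prod) := by
    rw [← (Equiv.sigmaFiberEquiv (Multiset.card (α := 𝒳 × 𝒴 × 𝒴))).summable_iff]
    have key : ∀ k : ℕ, HasSum (fun s : {m : Multiset (𝒳 × 𝒴 × 𝒴) // Multiset.card m = k} =>
        ((Multiset.card s.1 * Q (Multiset.card s.1)) * (s.1.countPerms * (s.1.map w).prod) : ℝ))
        (k * Q k) := by
      intro k
      have := Finset.sum_pow (s := Finset.univ) w k
      rw [hw1, one_pow, Finset.sym_univ] at this
      have h4 : HasSum (fun s : Sym (𝒳 × 𝒴 × 𝒴) k =>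
        ((k * Q k) * (s.1.countPerms * (s.1.map w).prod) : ℝ)) (k * Q k) := by
        have h5 := hasSum_fintype (fun s : Sym (𝒳 × 𝒴 × 𝒴) k =>
          ((k * Q k) * (s.1.countPerms * (s.1.map w).prod) : ℝ))
        rw [← Finset.mul_sum] at h5
        convert h5 using 1
        exact (mul_one _).symm.trans (congrArg _ this)
      have h6 : (fun s : {m : Multiset (𝒳 × 𝒴 × 𝒴) // Multiset.card m = k} =>
          ((Multiset.card s.1 * Q (Multiset.card s.1)) *
            (s.1.countPerms * (s.1.map w).prod) : ℝ)) =
          fun s => ((k * Q k) * (s.1.countPerms * (s.1.map w).prod) : ℝ) := by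
        funext s
        rw [s.2]
      rw [h6]
      exact h4
    rw [summable_sigma_of_nonneg]
    · refine ⟨fun k => (key k).summable, ?_⟩
      refine hQm.congr fun k => ?_
      exact (key k).tsum_eq.symm
    · intro s
      exact mul_nonneg (mul_nonneg (Nat.cast_nonneg _) (hQ0 _)) (hnn _)
  refine ⟨fun τ => ?_, ?_⟩
  · rw [heta]
    exact mul_nonneg (hν0 _) (mul_nonneg (hQ0 _) (hnn _))
  · have := (Summable.of_finite (f := ν)).mul_of_nonneg hs hν0
      (fun m => mul_nonneg (mul_nonneg (Nat.cast_nonneg _) (hQ0 _)) (hnn _))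
    refine this.congr fun τ => ?_
    rw [heta]
    unfold deg
    ring

theorem aux_marg {𝒳 𝒴 : Type} [Fintype 𝒳] [Fintype 𝒴] [DecidableEq 𝒳] [DecidableEq 𝒴]
    (f : T1 𝒳 𝒴 → ℝ) (hf : ∀ τ, 0 ≤ f τ)
    (hs : Summable fun τ : T1 𝒳 𝒴 => f τ * (deg τ : ℝ)) (τ : T1 𝒳 𝒴) (hτ : 0 < f τ)
    (p : 𝒳 × 𝒴 × 𝒴) (hp : p ∈ τ.2) :
    marg1 f (p.1, p.2.1) ≠ 0 ∧ condNbr f (p.1, p.2.1) (τ.1, p.2.2) ≠ 0 := by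
  obtain ⟨h0, h1⟩ := aux_nbrRoot_pos f hf hs
  have h := h1 τ hτ p hp
  have hO : 0 < margO f (τ.1, p.2.2) :=
    Finset.sum_pos' (fun u _ => h0 _) ⟨_, Finset.mem_univ (p.1, p.2.1), h⟩
  refine ⟨ne_of_gt (Finset.sum_pos' (fun u _ => h0 _) ⟨_, Finset.mem_univ (τ.1, p.2.2), h⟩), ?_⟩
  unfold condNbr
  rw [if_pos hO]
  exact (div_pos h hO).ne'

/-- **Absolute continuity of `μ` with respect to `μ̌` and `μ̂`.**
If `μ` is a pmf on `T1` with mean degree `β ∈ (0, ∞)`, `η₁` is the law with degree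
distribution `Q` and i.i.d. marks, and `μ ≪ η₁`, then `μ ≪ μ̌` and `μ ≪ μ̂`:
for every `τ`, `μ̌ τ = 0` implies `μ τ = 0`, and `μ̂ τ = 0` implies `μ τ = 0`. -/
theorem mu_absolutelyContinuous_muCheck_muHat
    {𝒳 𝒴 : Type} [Fintype 𝒳] [Fintype 𝒴] [DecidableEq 𝒳] [DecidableEq 𝒴]
    (ν : 𝒳 → ℝ) (hν0 : ∀ x, 0 ≤ ν x) (hν1 : ∑ x, ν x = 1)
    (ξ : 𝒴 × 𝒴 → ℝ) (hξ0 : ∀ p, 0 ≤ ξ p) (hξ1 : ∑ p : 𝒴 × 𝒴, ξ p = 1)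
    (Q : ℕ → ℝ) (hQ0 : ∀ k, 0 ≤ Q k) (hQ1 : HasSum Q 1)
    (hQm : Summable fun k : ℕ => (k : ℝ) * Q k)
    (hQpos : 0 < ∑' k : ℕ, (k : ℝ) * Q k)
    (μ : T1 𝒳 𝒴 → ℝ) (hμ0 : ∀ τ, 0 ≤ μ τ) (hμ1 : HasSum μ 1)
    (hβfin : Summable fun τ : T1 𝒳 𝒴 => μ τ * (deg τ : ℝ))
    (hβpos : 0 < meanDeg μ)
    (habs : ∀ τ, eta1 ν ξ Q τ = 0 → μ τ = 0) :
    (∀ τ : T1 𝒳 𝒴, muCheck ν ξ Q μ τ = 0 → μ τ = 0) ∧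
      (∀ τ : T1 𝒳 𝒴, muHat ν ξ Q μ τ = 0 → μ τ = 0) := by
  obtain ⟨he0, hes⟩ := aux_eta1 ν hν0 hν1 ξ hξ0 hξ1 Q hQ0 hQm
  constructor
  all_goals
    intro τ
    contrapose
    intro hτ
    have he : eta1 ν ξ Q τ ≠ 0 := fun h => hτ (habs τ h)
    have hμp : 0 < μ τ := lt_of_le_of_ne (hμ0 τ) (Ne.symm hτ)
    have hep : 0 < eta1 ν ξ Q τ := lt_of_le_of_ne (he0 τ) (Ne.symm he)
    refine mul_ne_zero he (Multiset.prod_ne_zero ?_)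
    intro hm
    obtain ⟨p, hp, h⟩ := Multiset.mem_map.1 hm
    have A := aux_marg μ hμ0 hβfin τ hμp p hp
    have B := aux_marg _ he0 hes τ hep p hp
  · exact div_ne_zero A.1 B.1 h
  · exact div_ne_zero A.2 B.2 h
end
end

section
/- Let μ be a probability mass function on T₁ with 0 < β := Σ_τ μ(τ)·deg(τ) < ∞, let η₁ be the law on T₁ with degree distribution Q and i.i.d. marks, where Q has finite nonzero mean, assume μ is absolutely continuous with respect to η₁, and assume μ̄^{1,o} is symmetric (μ̄^{1,o}((a,y),(b,y′)) = μ̄^{1,o}((b,y′),(a,y)) for all a,b ∈ 𝒳, y,y′ ∈ 𝒴). Then the sums Σ_τ μ(τ)·log(μ̌(τ)/η₁(τ)) and Σ_τ μ(τ)·log(μ̂(τ)/η₁(τ)) converge absolutely, and β·H(μ̄^{1,o} ‖ η̄₁^{1,o}) = Σ_τ μ(τ)·log(μ̌(τ)/η₁(τ)) + Σ_τ μ(τ)·log(μ̂(τ)/η₁(τ)). -/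
open scoped BigOperators ENNReal Classical

noncomputable section

section Helpers

variable {𝒳 𝒴 : Type} [Fintype 𝒳] [Fintype 𝒴] [DecidableEq 𝒳] [DecidableEq 𝒴]

lemma ordCoeff_eq_countPerms (m : Multiset (𝒳 × 𝒴 × 𝒴)) :
    ordCoeff m = (m.countPerms : ℝ) := by
  have h : (∏ s ∈ m.toFinset, Nat.factorial (m.count s)) * m.countPerms
      = Nat.factorial (Multiset.card m) := by
    have := Nat.multinomial_spec m.toFinset (fun s => m.count s)
    rw [Multiset.toFinset_sum_count_eq] at this
    rw [← this]
    congr 1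
  have hpos : (∏ s ∈ m.toFinset, (Nat.factorial (m.count s) : ℝ)) ≠ 0 :=
    Finset.prod_ne_zero_iff.2 fun s _ => by positivity
  rw [ordCoeff, div_eq_iff hpos, ← h]
  push_cast
  ring

lemma ordCoeff_pos (m : Multiset (𝒳 × 𝒴 × 𝒴)) : 0 < ordCoeff m := by
  unfold ordCoeff
  have : 0 < (∏ s ∈ m.toFinset, (Nat.factorial (m.count s) : ℝ)) :=
    Finset.prod_pos fun s _ => by positivity
  positivity

lemma prod_fact_univ (m : Multiset (𝒳 × 𝒴 × 𝒴)) :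
    (∏ s ∈ m.toFinset, (Nat.factorial (m.count s) : ℝ))
      = ∏ s, (Nat.factorial (m.count s) : ℝ) := by
  apply Finset.prod_subset (Finset.subset_univ _)
  intro s _ hs
  rw [Multiset.mem_toFinset] at hs
  simp [Multiset.count_eq_zero_of_notMem hs]

lemma ordCoeff_cons (s : 𝒳 × 𝒴 × 𝒴) (m : Multiset (𝒳 × 𝒴 × 𝒴)) :
    ordCoeff (s ::ₘ m) * ((s ::ₘ m).count s : ℝ) =
      ((Multiset.card m : ℝ) + 1) * ordCoeff m := by
  have key : (∏ t, (Nat.factorial ((s ::ₘ m).count t) : ℝ))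
      = ((s ::ₘ m).count s : ℝ) * ∏ t, (Nat.factorial (m.count t) : ℝ) := by
    rw [← Finset.mul_prod_erase Finset.univ _ (Finset.mem_univ s),
      ← Finset.mul_prod_erase Finset.univ (fun t => (Nat.factorial (m.count t) : ℝ))
        (Finset.mem_univ s), ← mul_assoc]
    congr 1
    · rw [Multiset.count_cons_self, Nat.factorial_succ]; push_cast; ring
    · apply Finset.prod_congr rfl
      intro t ht
      rw [Multiset.count_cons_of_ne (Finset.ne_of_mem_erase ht)]
  have h1 : (∏ t, (Nat.factorial (m.count t) : ℝ)) ≠ 0 :=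
    Finset.prod_ne_zero_iff.2 fun s _ => by positivity
  have h2 : ((s ::ₘ m).count s : ℝ) ≠ 0 := by
    rw [Multiset.count_cons_self]; positivity
  unfold ordCoeff
  rw [prod_fact_univ, prod_fact_univ, key, Multiset.card_cons, Nat.factorial_succ]
  push_cast
  field_simp

/-- Multinomial summation over all multisets. -/
lemma hasSum_multiset (w : 𝒳 × 𝒴 × 𝒴 → ℝ) (hw0 : ∀ s, 0 ≤ w s) (hw1 : ∑ s, w s = 1)
    (R : ℕ → ℝ) (hR0 : ∀ k, 0 ≤ R k) (r : ℝ) (hR : HasSum R r) :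
    HasSum (fun m : Multiset (𝒳 × 𝒴 × 𝒴) =>
      R (Multiset.card m) * (ordCoeff m * (m.map w).prod)) r := by
  set f : Multiset (𝒳 × 𝒴 × 𝒴) → ℝ := fun m =>
      R (Multiset.card m) * (ordCoeff m * (m.map w).prod) with hf
  have hprod : ∀ m : Multiset (𝒳 × 𝒴 × 𝒴), 0 ≤ (m.map w).prod := by
    intro m
    apply Multiset.prod_nonneg
    intro a ha
    obtain ⟨b, _, rfl⟩ := Multiset.mem_map.1 ha
    exact hw0 b
  have hf0 : ∀ m, 0 ≤ f m := fun m =>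
    mul_nonneg (hR0 _) (mul_nonneg (ordCoeff_pos m).le (hprod m))
  let e : (Σ n, Sym (𝒳 × 𝒴 × 𝒴) n) ≃ Multiset (𝒳 × 𝒴 × 𝒴) :=
    Equiv.sigmaFiberEquiv (Multiset.card : Multiset (𝒳 × 𝒴 × 𝒴) → ℕ)
  have hfib : ∀ n, HasSum (fun c : Sym (𝒳 × 𝒴 × 𝒴) n => (f ∘ e) ⟨n, c⟩) (R n) := by
    intro n
    have h1 : ∑ c : Sym (𝒳 × 𝒴 × 𝒴) n, (f ∘ e) ⟨n, c⟩ = R n := by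
      have h2 := Finset.sum_pow (s := Finset.univ) w n
      rw [hw1, one_pow, Finset.sym_univ] at h2
      calc _ = ∑ c : Sym (𝒳 × 𝒴 × 𝒴) n,
              R n * ((c.val.countPerms : ℝ) * (c.val.map w).prod) := by
            apply Finset.sum_congr rfl
            intro c _
            have : (f ∘ e) ⟨n, c⟩ = f c.val := rfl
            rw [this, hf]
            simp only
            rw [c.2, ordCoeff_eq_countPerms]
        _ = R n := by rw [← Finset.mul_sum, ← h2, mul_one]
    rw [← h1]
    exact hasSum_fintype _
  rw [← e.hasSum_iff]
  refine HasSum.sigma_of_hasSum hR hfib ?_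
  refine (summable_sigma_of_nonneg (f := f ∘ e) (fun x => hf0 _)).2 ⟨fun n => (hfib n).summable, ?_⟩
  have : (fun x => ∑' y, (f ∘ e) ⟨x, y⟩) = R := funext fun n => (hfib n).tsum_eq
  rw [this]
  exact hR.summable

lemma hasSum_T1 (f : T1 𝒳 𝒴 → ℝ) (g : 𝒳 → ℝ)
    (h : ∀ x, HasSum (fun m => f (x, m)) (g x)) : HasSum f (∑ x, g x) := by
  have hx : ∀ x, HasSum (fun τ : T1 𝒳 𝒴 => if τ.1 = x then f τ else 0) (g x) := by
    intro x
    have hinj : Function.Injective (fun m : Multiset (𝒳 × 𝒴 × 𝒴) => ((x, m) : T1 𝒳 𝒴)) :=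
      fun a b hab => (Prod.mk.inj hab).2
    refine (hinj.hasSum_iff ?_).1 ?_
    · rintro ⟨x', m⟩ hn
      have : x' ≠ x := by
        rintro rfl
        exact hn ⟨m, rfl⟩
      simp [this]
    · simpa [Function.comp_def] using h x
  have := hasSum_sum (s := Finset.univ) (fun x _ => hx x)
  simpa using this

lemma xiBar_sum (ξ : 𝒴 × 𝒴 → ℝ) (hξ1 : ∑ p : 𝒴 × 𝒴, ξ p = 1) :
    ∑ p : 𝒴 × 𝒴, xiBar ξ p.1 p.2 = 1 := by
  have h2 : ∑ p : 𝒴 × 𝒴, ξ (p.2, p.1) = 1 := by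
    rw [← hξ1]
    exact Fintype.sum_equiv (Equiv.prodComm 𝒴 𝒴) _ _ (fun _ => rfl)
  unfold xiBar
  rw [← Finset.sum_div, Finset.sum_add_distrib, h2]
  simp only [Prod.mk.eta]
  rw [hξ1]
  norm_num

/-- Count sum against a multinomial weight. -/
lemma hasSum_count (w : 𝒳 × 𝒴 × 𝒴 → ℝ) (hw0 : ∀ s, 0 ≤ w s) (hw1 : ∑ s, w s = 1)
    (Q : ℕ → ℝ) (hQ0 : ∀ k, 0 ≤ Q k) (q : ℝ)
    (hQ : HasSum (fun k : ℕ => (k : ℝ) * Q k) q) (s : 𝒳 × 𝒴 × 𝒴) :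
    HasSum (fun m : Multiset (𝒳 × 𝒴 × 𝒴) =>
      Q (Multiset.card m) * (ordCoeff m * (m.map w).prod) * (m.count s : ℝ)) (w s * q) := by
  have hinj : Function.Injective (fun m : Multiset (𝒳 × 𝒴 × 𝒴) => s ::ₘ m) :=
    fun a b hab => (Multiset.cons_inj_right s).1 hab
  refine (hinj.hasSum_iff ?_).1 ?_
  · intro m hm
    have : s ∉ m := fun hs => hm ⟨m.erase s, Multiset.cons_erase hs⟩
    simp [Multiset.count_eq_zero_of_notMem this]
  · have hQ' : HasSum (fun k : ℕ => ((k : ℝ) + 1) * Q (k + 1)) q := by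
      have := (hasSum_nat_add_iff' (f := fun k : ℕ => (k : ℝ) * Q k) 1).2 hQ
      simpa using this
    have h := (hasSum_multiset w hw0 hw1 _
      (fun k => mul_nonneg (by positivity) (hQ0 _)) q hQ').mul_left (w s)
    refine h.congr_fun ?_
    intro m
    simp only [Function.comp]
    have := ordCoeff_cons s m
    rw [Multiset.map_cons, Multiset.prod_cons, Multiset.card_cons]
    linear_combination (Q (Multiset.card m + 1) * w s * (m.map w).prod) * this

lemma nbrRoot_eta1 (ν : 𝒳 → ℝ) (hν0 : ∀ x, 0 ≤ ν x) (hν1 : ∑ x, ν x = 1)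
    (ξ : 𝒴 × 𝒴 → ℝ) (hξ0 : ∀ p, 0 ≤ ξ p) (hξ1 : ∑ p : 𝒴 × 𝒴, ξ p = 1)
    (Q : ℕ → ℝ) (hQ0 : ∀ k, 0 ≤ Q k)
    (hQm : Summable fun k : ℕ => (k : ℝ) * Q k)
    (hQpos : 0 < ∑' k : ℕ, (k : ℝ) * Q k) (p : (𝒳 × 𝒴) × (𝒳 × 𝒴)) :
    nbrRoot (eta1 ν ξ Q) p = ν p.1.1 * ν p.2.1 * xiBar ξ p.1.2 p.2.2 := by
  set q := ∑' k : ℕ, (k : ℝ) * Q k with hq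
  set w : 𝒳 × 𝒴 × 𝒴 → ℝ := fun p => ν p.1 * xiBar ξ p.2.1 p.2.2 with hw
  have hw0 : ∀ s, 0 ≤ w s := by
    intro s
    have h1 := hξ0 (s.2.1, s.2.2)
    have h2 := hξ0 (s.2.2, s.2.1)
    exact mul_nonneg (hν0 _) (by unfold xiBar; positivity)
  have hw1 : ∑ s, w s = 1 := by
    rw [Fintype.sum_prod_type]
    simp only [hw, ← Finset.mul_sum, xiBar_sum ξ hξ1, mul_one, hν1]
  have heta : ∀ x m, eta1 ν ξ Q (x, m) =
      ν x * (Q (Multiset.card m) * (ordCoeff m * (m.map w).prod)) := by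
    intro x m
    simp only [eta1, hw]
    ring
  have hmean : meanDeg (eta1 ν ξ Q) = q := by
    have : HasSum (fun τ : T1 𝒳 𝒴 => eta1 ν ξ Q τ * (deg τ : ℝ)) (∑ x, ν x * q) := by
      apply hasSum_T1
      intro x
      have := (hasSum_multiset w hw0 hw1 _
        (fun k => mul_nonneg (by positivity) (hQ0 k)) q hQm.hasSum).mul_left (ν x)
      refine this.congr_fun ?_
      intro m
      simp only [heta, deg]
      ring
    rw [meanDeg, this.tsum_eq, ← Finset.sum_mul, hν1, one_mul]
  have hc := (hasSum_count w hw0 hw1 Q hQ0 q hQm.hasSum (p.1.1, p.1.2, p.2.2)).mul_left (ν p.2.1)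
  have : (∑' m : Multiset (𝒳 × 𝒴 × 𝒴),
      eta1 ν ξ Q (p.2.1, m) * (m.count (p.1.1, p.1.2, p.2.2) : ℝ))
      = ν p.2.1 * (w (p.1.1, p.1.2, p.2.2) * q) := by
    rw [← hc.tsum_eq]
    apply tsum_congr
    intro m
    rw [heta]
    ring
  rw [nbrRoot, hmean, this]
  simp only [hw]
  field_simp

lemma summable_count (μ : T1 𝒳 𝒴 → ℝ) (hμ0 : ∀ τ, 0 ≤ μ τ)
    (hβfin : Summable fun τ : T1 𝒳 𝒴 => μ τ * (deg τ : ℝ)) (x : 𝒳) (s : 𝒳 × 𝒴 × 𝒴) :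
    Summable fun m : Multiset (𝒳 × 𝒴 × 𝒴) => μ (x, m) * (m.count s : ℝ) := by
  have hinj : Function.Injective (fun m : Multiset (𝒳 × 𝒴 × 𝒴) => ((x, m) : T1 𝒳 𝒴)) :=
      fun a b hab => (Prod.mk.inj hab).2
  refine Summable.of_nonneg_of_le (fun m => mul_nonneg (hμ0 _) (by positivity)) (fun m => ?_)
    (hβfin.comp_injective hinj)
  simp only [Function.comp]
  refine mul_le_mul_of_nonneg_left ?_ (hμ0 _)
  exact_mod_cast Multiset.count_le_card s m

lemma hasSum_marks (μ : T1 𝒳 𝒴 → ℝ) (hμ0 : ∀ τ, 0 ≤ μ τ)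
    (hβfin : Summable fun τ : T1 𝒳 𝒴 => μ τ * (deg τ : ℝ)) (hβpos : 0 < meanDeg μ)
    (F : 𝒳 → 𝒳 × 𝒴 × 𝒴 → ℝ) :
    HasSum (fun τ : T1 𝒳 𝒴 => μ τ * (τ.2.map (F τ.1)).sum)
      (meanDeg μ * ∑ p : (𝒳 × 𝒴) × (𝒳 × 𝒴),
        nbrRoot μ p * F p.2.1 (p.1.1, p.1.2, p.2.2)) := by
  have h1 : HasSum (fun τ : T1 𝒳 𝒴 => μ τ * (τ.2.map (F τ.1)).sum)
      (∑ x, ∑ s, (∑' m : Multiset (𝒳 × 𝒴 × 𝒴), μ (x, m) * (m.count s : ℝ)) * F x s) := by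
    apply hasSum_T1
    intro x
    have := hasSum_sum (s := Finset.univ) (fun s _ =>
      ((summable_count μ hμ0 hβfin x s).hasSum.mul_right (F x s)))
    refine this.congr_fun ?_
    intro m
    simp only
    rw [Finset.sum_multiset_map_count, Finset.mul_sum]
    rw [Finset.sum_subset (Finset.subset_univ m.toFinset)]
    · apply Finset.sum_congr rfl
      intro s _
      rw [nsmul_eq_mul]; ring
    · intro s _ hs
      rw [Multiset.mem_toFinset] at hs
      simp [Multiset.count_eq_zero_of_notMem hs]
  convert h1 using 1
  rw [Finset.mul_sum]
  simp only [Fintype.sum_prod_type]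
  have e : ∀ a y b y', meanDeg μ * (nbrRoot μ ((a, y), (b, y')) * F b (a, y, y'))
      = (∑' m : Multiset (𝒳 × 𝒴 × 𝒴), μ (b, m) * (m.count (a, y, y') : ℝ)) * F b (a, y, y') := by
    intro a y b y'
    rw [nbrRoot]
    field_simp
  simp only [e]
  have e2 : ∀ a : 𝒳, (∑ y : 𝒴, ∑ b : 𝒳, ∑ y' : 𝒴,
      (∑' m : Multiset (𝒳 × 𝒴 × 𝒴), μ (b, m) * (m.count (a, y, y') : ℝ)) * F b (a, y, y')) =
      ∑ b : 𝒳, ∑ y : 𝒴, ∑ y' : 𝒴,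
      (∑' m : Multiset (𝒳 × 𝒴 × 𝒴), μ (b, m) * (m.count (a, y, y') : ℝ)) * F b (a, y, y') :=
    fun a => Finset.sum_comm
  simp only [e2]
  exact Finset.sum_comm

lemma nbrRoot_pos_of_mem (μ : T1 𝒳 𝒴 → ℝ) (hμ0 : ∀ τ, 0 ≤ μ τ)
    (hβfin : Summable fun τ : T1 𝒳 𝒴 => μ τ * (deg τ : ℝ)) (hβpos : 0 < meanDeg μ)
    (x : 𝒳) (m : Multiset (𝒳 × 𝒴 × 𝒴)) (hm : 0 < μ (x, m)) (s : 𝒳 × 𝒴 × 𝒴) (hs : s ∈ m) :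
    0 < nbrRoot μ ((s.1, s.2.1), (x, s.2.2)) := by
  refine mul_pos (by positivity) ?_
  refine (summable_count μ hμ0 hβfin x s).tsum_pos
    (fun m => mul_nonneg (hμ0 _) (by positivity)) m ?_
  exact mul_pos hm (by exact_mod_cast Multiset.count_pos.2 hs)

lemma nbrRoot_nonneg (μ : T1 𝒳 𝒴 → ℝ) (hμ0 : ∀ τ, 0 ≤ μ τ) (hβpos : 0 < meanDeg μ)
    (p : (𝒳 × 𝒴) × (𝒳 × 𝒴)) : 0 ≤ nbrRoot μ p :=
  mul_nonneg (by positivity) (tsum_nonneg fun m => mul_nonneg (hμ0 _) (by positivity))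

lemma log_ratio_eq (μ η : T1 𝒳 𝒴 → ℝ) (τ : T1 𝒳 𝒴) (hη : η τ ≠ 0)
    (f : 𝒳 × 𝒴 × 𝒴 → ℝ) (hf : ∀ s ∈ τ.2, f s ≠ 0) :
    μ τ * Real.log (η τ * (τ.2.map f).prod / η τ)
      = μ τ * (τ.2.map fun s => Real.log (f s)).sum := by
  rw [mul_div_cancel_left₀ _ hη, Real.log_multiset_prod, Multiset.map_map]
  · rfl
  · intro a ha
    obtain ⟨b, hb, rfl⟩ := Multiset.mem_map.1 ha
    exact hf b hb

end Helpers

/-- **Decomposition of `β·H(μ̄^{1,o} ‖ η̄₁^{1,o})` (Proposition 5.4).**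
If `μ` is a pmf on `T1` with mean degree `β ∈ (0, ∞)`, `η₁` is the law with degree
distribution `Q` and i.i.d. marks, `μ ≪ η₁`, and `μ̄^{1,o}` is symmetric, then the
series `∑_τ μ τ · log (μ̌ τ / η₁ τ)` and `∑_τ μ τ · log (μ̂ τ / η₁ τ)` converge
absolutely and
`β·H(μ̄^{1,o} ‖ η̄₁^{1,o}) = ∑_τ μ τ · log (μ̌ τ / η₁ τ) + ∑_τ μ τ · log (μ̂ τ / η₁ τ)`. -/
theorem relEnt_decomposition_check_hat
    {𝒳 𝒴 : Type} [Fintype 𝒳] [Fintype 𝒴] [DecidableEq 𝒳] [DecidableEq 𝒴]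
    (ν : 𝒳 → ℝ) (hν0 : ∀ x, 0 ≤ ν x) (hν1 : ∑ x, ν x = 1)
    (ξ : 𝒴 × 𝒴 → ℝ) (hξ0 : ∀ p, 0 ≤ ξ p) (hξ1 : ∑ p : 𝒴 × 𝒴, ξ p = 1)
    (Q : ℕ → ℝ) (hQ0 : ∀ k, 0 ≤ Q k) (hQ1 : HasSum Q 1)
    (hQm : Summable fun k : ℕ => (k : ℝ) * Q k)
    (hQpos : 0 < ∑' k : ℕ, (k : ℝ) * Q k)
    (μ : T1 𝒳 𝒴 → ℝ) (hμ0 : ∀ τ, 0 ≤ μ τ) (hμ1 : HasSum μ 1)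
    (hβfin : Summable fun τ : T1 𝒳 𝒴 => μ τ * (deg τ : ℝ))
    (hβpos : 0 < meanDeg μ)
    (habs : ∀ τ, eta1 ν ξ Q τ = 0 → μ τ = 0)
    (hsym : ∀ u v : 𝒳 × 𝒴, nbrRoot μ (u, v) = nbrRoot μ (v, u)) :
    (Summable fun τ : T1 𝒳 𝒴 => |μ τ * Real.log (muCheck ν ξ Q μ τ / eta1 ν ξ Q τ)|) ∧
      (Summable fun τ : T1 𝒳 𝒴 => |μ τ * Real.log (muHat ν ξ Q μ τ / eta1 ν ξ Q τ)|) ∧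
      meanDeg μ *
          (∑ p : (𝒳 × 𝒴) × (𝒳 × 𝒴),
            nbrRoot μ p * Real.log (nbrRoot μ p / nbrRoot (eta1 ν ξ Q) p)) =
        (∑' τ : T1 𝒳 𝒴, μ τ * Real.log (muCheck ν ξ Q μ τ / eta1 ν ξ Q τ)) +
          ∑' τ : T1 𝒳 𝒴, μ τ * Real.log (muHat ν ξ Q μ τ / eta1 ν ξ Q τ) := by
  set η := eta1 ν ξ Q with hη
  set N := nbrRoot μ with hN
  have hE := nbrRoot_eta1 ν hν0 hν1 ξ hξ0 hξ1 Q hQ0 hQm hQpos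
  rw [← hη] at hE
  have hx0 : ∀ y y', 0 ≤ xiBar ξ y y' := fun y y' => by
    have h1 := hξ0 (y, y')
    have h2 := hξ0 (y', y)
    unfold xiBar
    positivity
  have hE0 : ∀ p, 0 ≤ nbrRoot η p := fun p => by
    rw [hE]; exact mul_nonneg (mul_nonneg (hν0 _) (hν0 _)) (hx0 _ _)
  have hEsym : ∀ u v, nbrRoot η (u, v) = nbrRoot η (v, u) := fun u v => by
    rw [hE, hE]; simp only [xiBar]; ring
  have hN0 : ∀ p, 0 ≤ N p := nbrRoot_nonneg μ hμ0 hβpos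
  -- absolute continuity of the marginals
  have hac : ∀ p, N p ≠ 0 → 0 < nbrRoot η p := by
    intro p hp
    have hex : ∃ m, μ (p.2.1, m) * (m.count (p.1.1, p.1.2, p.2.2) : ℝ) ≠ 0 := by
      by_contra hcon
      push Not at hcon
      apply hp
      rw [hN, nbrRoot]
      simp [hcon]
    obtain ⟨m, hm⟩ := hex
    have hμm : μ (p.2.1, m) ≠ 0 := left_ne_zero_of_mul hm
    have hcm : (p.1.1, p.1.2, p.2.2) ∈ m := by
      have := right_ne_zero_of_mul hm
      rw [← Multiset.count_ne_zero]
      exact_mod_cast this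
    have hηm : η (p.2.1, m) ≠ 0 := fun h => hμm (habs _ h)
    rw [hη, eta1] at hηm
    have h1 : ν p.2.1 ≠ 0 := left_ne_zero_of_mul (left_ne_zero_of_mul (left_ne_zero_of_mul hηm))
    have h2 := right_ne_zero_of_mul hηm
    have h3 : ν p.1.1 * xiBar ξ p.1.2 p.2.2 ≠ 0 := by
      intro h
      exact h2 (Multiset.prod_eq_zero (Multiset.mem_map.2 ⟨_, hcm, h⟩))
    refine lt_of_le_of_ne (hE0 p) (Ne.symm ?_)
    rw [hE]
    intro h
    have : ν p.2.1 * (ν p.1.1 * xiBar ξ p.1.2 p.2.2) = 0 := by rw [← h]; ring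
    exact (mul_ne_zero h1 h3) this
  -- positivity of marginals
  have hM1 : ∀ (κ : T1 𝒳 𝒴 → ℝ), (∀ p, 0 ≤ nbrRoot κ p) → ∀ u v, 0 < nbrRoot κ (u, v) →
      0 < marg1 κ u := fun κ h0 u v h =>
    Finset.sum_pos' (fun i _ => h0 _) ⟨v, Finset.mem_univ _, h⟩
  have hMO : ∀ (κ : T1 𝒳 𝒴 → ℝ), (∀ p, 0 ≤ nbrRoot κ p) → ∀ u v, 0 < nbrRoot κ (u, v) →
      0 < margO κ v := fun κ h0 u v h =>
    Finset.sum_pos' (fun i _ => h0 _) ⟨u, Finset.mem_univ _, h⟩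
  have hμO : ∀ v, margO μ v = marg1 μ v := fun v =>
    Finset.sum_congr rfl fun u _ => hsym u v
  have hηO : ∀ v, margO η v = marg1 η v := fun v =>
    Finset.sum_congr rfl fun u _ => hEsym u v
  have hmem : ∀ τ : T1 𝒳 𝒴, μ τ ≠ 0 → ∀ s ∈ τ.2, 0 < N ((s.1, s.2.1), (τ.1, s.2.2)) :=
    fun τ hτ s hs => nbrRoot_pos_of_mem μ hμ0 hβfin hβpos τ.1 τ.2
      (lt_of_le_of_ne (hμ0 _) (Ne.symm hτ)) s hs
  let F1 : 𝒳 → 𝒳 × 𝒴 × 𝒴 → ℝ := fun _ s =>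
    Real.log (marg1 μ (s.1, s.2.1) / marg1 η (s.1, s.2.1))
  let F2 : 𝒳 → 𝒳 × 𝒴 × 𝒴 → ℝ := fun x s =>
    Real.log (condNbr μ (s.1, s.2.1) (x, s.2.2) / condNbr η (s.1, s.2.1) (x, s.2.2))
  have hS1 : HasSum (fun τ : T1 𝒳 𝒴 => μ τ * Real.log (muCheck ν ξ Q μ τ / η τ)) _ :=
    (hasSum_marks μ hμ0 hβfin hβpos F1).congr_fun (fun τ => by
      by_cases hτ : μ τ = 0
      · simp [hτ]
      · have hητ : η τ ≠ 0 := fun h => hτ (habs _ h)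
        refine log_ratio_eq μ η τ hητ _ ?_
        intro s hs
        have h := hmem τ hτ s hs
        exact (div_pos (hM1 μ hN0 _ _ h) (hM1 η hE0 _ _ (hac _ h.ne'))).ne')
  have hcond : ∀ u v, 0 < N (u, v) → condNbr μ u v = N (u, v) / marg1 μ v ∧
      condNbr η u v = nbrRoot η (u, v) / marg1 η v ∧ 0 < nbrRoot η (u, v) ∧
      0 < marg1 μ v ∧ 0 < marg1 η v ∧ 0 < marg1 μ u ∧ 0 < marg1 η u := by
    intro u v h
    have hE' := hac _ h.ne'
    have a1 := hMO μ hN0 u v h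
    have a2 := hMO η hE0 u v hE'
    refine ⟨?_, ?_, hE', hμO v ▸ a1, hηO v ▸ a2, hM1 μ hN0 u v h, hM1 η hE0 u v hE'⟩
    · rw [condNbr, if_pos a1, hμO]
    · rw [condNbr, if_pos a2, hηO]
  have hS2 : HasSum (fun τ : T1 𝒳 𝒴 => μ τ * Real.log (muHat ν ξ Q μ τ / η τ)) _ :=
    (hasSum_marks μ hμ0 hβfin hβpos F2).congr_fun (fun τ => by
      by_cases hτ : μ τ = 0
      · simp [hτ]
      · have hητ : η τ ≠ 0 := fun h => hτ (habs _ h)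
        refine log_ratio_eq μ η τ hητ _ ?_
        intro s hs
        have h := hmem τ hτ s hs
        obtain ⟨c1, c2, c3, c4, c5, -, -⟩ := hcond _ _ h
        rw [c1, c2]
        exact (div_pos (div_pos h c4) (div_pos c3 c5)).ne')
  refine ⟨hS1.summable.abs, hS2.summable.abs, ?_⟩
  rw [hS1.tsum_eq, hS2.tsum_eq, ← mul_add, ← Finset.sum_add_distrib]
  congr 1
  let L : 𝒳 × 𝒴 → ℝ := fun u => Real.log (marg1 μ u / marg1 η u)
  have hterm : ∀ p : (𝒳 × 𝒴) × (𝒳 × 𝒴),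
      N p * F1 p.2.1 (p.1.1, p.1.2, p.2.2) + N p * F2 p.2.1 (p.1.1, p.1.2, p.2.2)
      = N p * Real.log (N p / nbrRoot η p) + (N p * L p.1 - N p * L p.2) := by
    rintro ⟨u, v⟩
    by_cases h0 : N (u, v) = 0
    · simp [h0]
    have h : 0 < N (u, v) := lt_of_le_of_ne (hN0 _) (Ne.symm h0)
    obtain ⟨c1, c2, c3, c4, c5, c6, c7⟩ := hcond _ _ h
    simp only [F1, F2, L, Prod.mk.eta]
    rw [c1, c2, Real.log_div (div_pos h c4).ne' (div_pos c3 c5).ne', Real.log_div h.ne' c4.ne',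
      Real.log_div c3.ne' c5.ne', Real.log_div c4.ne' c5.ne', Real.log_div h.ne' c3.ne']
    ring
  rw [Finset.sum_congr rfl fun p _ => hterm p, Finset.sum_add_distrib, Finset.sum_sub_distrib]
  have hswap : ∑ p : (𝒳 × 𝒴) × (𝒳 × 𝒴), N p * L p.1 = ∑ p, N p * L p.2 :=
    Fintype.sum_equiv (Equiv.prodComm _ _) _ _ (fun p => by
      obtain ⟨u, v⟩ := p
      simp [hsym u v])
  rw [hswap, sub_self, add_zero]
end
end
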